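/- arXiv:1401.4209 — 8 statements merged into one kernel-verified Lean document; each statement's English description precedes it below -/
import Mathlib

section
/- Let J be a finite nonempty index set and let v : J → (Fin n → ℂ) be a family of nonzero vectors. Then the minimum, over all b : Fin n → ℂ satisfying v j ⬝ᵥ b ≠ 0 for every j ∈ J, of the number of nonzero entries ‖b‖₀ of b, equals the minimum cardinality of a set S ⊆ Fin n such that for every j ∈ J there exists k ∈ S with v j k ≠ 0; moreover both minima are attained. -/
open Matrix

theorem exists_vec_of_hitting {n : ℕ} {J : Type*} [Fintype J]
    (v : J → Fin n → ℂ) (S : Set (Fin n)) (hS : ∀ j : J, ∃ k ∈ S, v j k ≠ 0) :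
    ∃ b : Fin n → ℂ, (∀ j : J, v j ⬝ᵥ b ≠ 0) ∧ {i | b i ≠ 0} ⊆ S := by
  let p : Submodule ℂ (Fin n → ℂ) :=
    { carrier := {b | ∀ i, i ∉ S → b i = 0}
      add_mem' := by
        intro a b ha hb i hi
        simp [ha i hi, hb i hi]
      zero_mem' := by
        intro i _
        rfl
      smul_mem' := by
        intro c b hb i hi
        simp [hb i hi] }
  let f : J → Module.Dual ℂ (Fin n → ℂ) := fun j =>
    { toFun := fun b => v j ⬝ᵥ b
      map_add' := fun a b => dotProduct_add _ _ _
      map_smul' := fun c b => dotProduct_smul _ _ _ }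
  obtain ⟨b, hb, hf⟩ := Module.Dual.exists_forall_mem_ne_zero_of_forall_exists p f (by
    intro j
    obtain ⟨k, hk, hne⟩ := hS j
    refine ⟨Pi.single k 1, ?_, ?_⟩
    · intro i hi
      have : i ≠ k := fun h => hi (h ▸ hk)
      simp [this]
    · change v j ⬝ᵥ Pi.single k 1 ≠ 0
      simpa using hne)
  refine ⟨b, hf, ?_⟩
  intro i hi
  by_contra h
  exact hi (hb i h)

theorem hitting_of_vec {n : ℕ} {J : Type*} (v : J → Fin n → ℂ) (b : Fin n → ℂ)
    (hb : ∀ j : J, v j ⬝ᵥ b ≠ 0) : ∀ j : J, ∃ k ∈ {i | b i ≠ 0}, v j k ≠ 0 := by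
  intro j
  obtain ⟨k, _, hk⟩ := Finset.exists_ne_zero_of_sum_ne_zero (hb j)
  exact ⟨k, right_ne_zero_of_mul hk, left_ne_zero_of_mul hk⟩

/-- the minimum number of nonzero entries of a vector `b`
non-orthogonal to all the nonzero vectors `v j` equals the minimum cardinality
of a set `S` hitting the support of every `v j`, and both minima are attained. -/
theorem stmt_4 {n : ℕ} {J : Type*} [Fintype J] [Nonempty J]
    (v : J → Fin n → ℂ) (hv : ∀ j, v j ≠ 0) :
    sInf {m : ℕ | ∃ b : Fin n → ℂ,
        (∀ j : J, v j ⬝ᵥ b ≠ 0) ∧ {i | b i ≠ 0}.ncard = m}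
      = sInf {m : ℕ | ∃ S : Set (Fin n),
        (∀ j : J, ∃ k ∈ S, v j k ≠ 0) ∧ S.ncard = m} ∧
    sInf {m : ℕ | ∃ b : Fin n → ℂ,
        (∀ j : J, v j ⬝ᵥ b ≠ 0) ∧ {i | b i ≠ 0}.ncard = m}
      ∈ {m : ℕ | ∃ b : Fin n → ℂ,
        (∀ j : J, v j ⬝ᵥ b ≠ 0) ∧ {i | b i ≠ 0}.ncard = m} ∧
    sInf {m : ℕ | ∃ S : Set (Fin n),
        (∀ j : J, ∃ k ∈ S, v j k ≠ 0) ∧ S.ncard = m}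
      ∈ {m : ℕ | ∃ S : Set (Fin n),
        (∀ j : J, ∃ k ∈ S, v j k ≠ 0) ∧ S.ncard = m} := by
  have hB : {m : ℕ | ∃ S : Set (Fin n),
        (∀ j : J, ∃ k ∈ S, v j k ≠ 0) ∧ S.ncard = m}.Nonempty := by
    refine ⟨_, Set.univ, fun j => ?_, rfl⟩
    obtain ⟨k, hk⟩ := Function.ne_iff.mp (hv j)
    exact ⟨k, Set.mem_univ _, hk⟩
  have hBm := Nat.sInf_mem hB
  have hA : {m : ℕ | ∃ b : Fin n → ℂ,
        (∀ j : J, v j ⬝ᵥ b ≠ 0) ∧ {i | b i ≠ 0}.ncard = m}.Nonempty := by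
    obtain ⟨S, hS, _⟩ := hBm
    obtain ⟨b, hb, _⟩ := exists_vec_of_hitting v S hS
    exact ⟨_, b, hb, rfl⟩
  have hAm := Nat.sInf_mem hA
  refine ⟨le_antisymm ?_ ?_, hAm, hBm⟩
  · obtain ⟨S, hS, hc⟩ := hBm
    obtain ⟨b, hb, hsub⟩ := exists_vec_of_hitting v S hS
    rw [← hc]
    exact le_trans (Nat.sInf_le ⟨b, hb, rfl⟩) (Set.ncard_le_ncard hsub (Set.toFinite S))
  · obtain ⟨b, hb, hc⟩ := hAm
    rw [← hc]
    exact Nat.sInf_le ⟨_, hitting_of_vec v b hb, rfl⟩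
end

section
/- Let A : Matrix (Fin n) (Fin n) ℂ, let λ : Fin n → ℂ be pairwise distinct eigenvalues of A, and let w : Fin n → (Fin n → ℂ) be corresponding left eigenvectors, i.e., w j ≠ 0 and Matrix.vecMul (w j) A = λ j • w j for every j. Then for every b : Fin n → ℂ, the pair (A, b) is controllable if and only if w j ⬝ᵥ b ≠ 0 for every j : Fin n. -/
open Matrix

/-- The pair `(A, b)` is controllable if the Kalman rank condition holds:
the span of `A ^ k *ᵥ b`, `k = 0, …, n-1`, is all of `Fin n → ℂ`. -/
def Controllable {n : ℕ} (A : Matrix (Fin n) (Fin n) ℂ) (b : Fin n → ℂ) : Prop :=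
  Submodule.span ℂ (Set.range fun k : Fin n => (A ^ (k : ℕ)) *ᵥ b) = ⊤

/-- PBH eigenvector test for a matrix with `n` distinct
eigenvalues and corresponding left eigenvectors `w j`. -/
theorem stmt_5 {n : ℕ} (A : Matrix (Fin n) (Fin n) ℂ) (lam : Fin n → ℂ)
    (w : Fin n → Fin n → ℂ)
    (hdist : ∀ j j' : Fin n, j ≠ j' → lam j ≠ lam j')
    (hw : ∀ j, w j ≠ 0)
    (heig : ∀ j, Matrix.vecMul (w j) A = lam j • w j)
    (b : Fin n → ℂ) :
    Controllable A b ↔ ∀ j : Fin n, w j ⬝ᵥ b ≠ 0 := by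
  have hpow : ∀ (j : Fin n) (k : ℕ), w j ⬝ᵥ ((A ^ k) *ᵥ b) = lam j ^ k * (w j ⬝ᵥ b) := by
    intro j k
    induction k with
    | zero => simp
    | succ k ih =>
      rw [pow_succ', ← Matrix.mulVec_mulVec, Matrix.dotProduct_mulVec, heig, smul_dotProduct, ih,
        smul_eq_mul, pow_succ']
      ring
  constructor
  · intro hc j hj
    apply hw j
    have hall : ∀ x : Fin n → ℂ, w j ⬝ᵥ x = 0 := by
      intro x
      have hx : x ∈ Submodule.span ℂ (Set.range fun k : Fin n => (A ^ (k : ℕ)) *ᵥ b) := by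
        rw [show Submodule.span ℂ (Set.range fun k : Fin n => (A ^ (k : ℕ)) *ᵥ b) = ⊤ from hc]
        trivial
      induction hx using Submodule.span_induction with
      | mem x h =>
        obtain ⟨k, rfl⟩ := h
        simp only [hpow, hj, mul_zero]
      | zero => simp
      | add x y _ _ hx hy => rw [dotProduct_add, hx, hy, add_zero]
      | smul a x _ hx => rw [dotProduct_smul, hx, smul_zero]
    ext i
    simpa using hall (Pi.single i 1)
  · intro hb
    have hinj : Function.Injective lam := by
      intro i j h
      by_contra hne
      exact hdist i j hne h
    have hli : LinearIndependent ℂ (fun k : Fin n => (A ^ (k : ℕ)) *ᵥ b) := by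
      rw [Fintype.linearIndependent_iff]
      intro c hc
      have hv : Matrix.vandermonde lam *ᵥ c = 0 := by
        ext j
        have h := congrArg (fun x => w j ⬝ᵥ x) hc
        simp only [dotProduct_sum, dotProduct_smul, hpow, dotProduct_zero, smul_eq_mul] at h
        have h2 : (∑ k : Fin n, lam j ^ (k : ℕ) * c k) * (w j ⬝ᵥ b) = 0 := by
          rw [← h, Finset.sum_mul]
          exact Finset.sum_congr rfl fun k _ => by ring
        simpa [Matrix.mulVec, dotProduct, Matrix.vandermonde_apply] using
          (mul_eq_zero.mp h2).resolve_right (hb j)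
      have := Matrix.eq_zero_of_mulVec_eq_zero (Matrix.det_vandermonde_ne_zero_iff.mpr hinj) hv
      intro i
      exact congrFun this i
    exact hli.span_eq_top_of_card_eq_finrank' (by simp)
end

section
/- Let A : Matrix (Fin n) (Fin n) ℂ, let λ : Fin n → ℂ be pairwise distinct eigenvalues of A, and let w : Fin n → (Fin n → ℂ) be corresponding left eigenvectors (w j ≠ 0 and Matrix.vecMul (w j) A = λ j • w j for every j). Then the minimum, over all b : Fin n → ℂ such that (A, b) is controllable, of the number of nonzero entries ‖b‖₀ of b, equals the minimum cardinality of a set S ⊆ Fin n such that for every j : Fin n there exists k ∈ S with w j k ≠ 0 (i.e., the minimum cardinality of a set cover of {1,…,n} by the sets S_i = {j : w j i ≠ 0}); moreover both minima are attained. -/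
open Matrix

theorem ctrl_dot_pow {n : ℕ} {A : Matrix (Fin n) (Fin n) ℂ} {l : ℂ} {w : Fin n → ℂ}
    (h : Matrix.vecMul w A = l • w) (b : Fin n → ℂ) (k : ℕ) :
    w ⬝ᵥ ((A ^ k) *ᵥ b) = l ^ k * (w ⬝ᵥ b) := by
  induction k with
  | zero => simp
  | succ k ih =>
    rw [pow_succ', ← Matrix.mulVec_mulVec, Matrix.dotProduct_mulVec, h, smul_dotProduct, ih,
      smul_eq_mul]
    ring

theorem ctrl_ne {n : ℕ} {A : Matrix (Fin n) (Fin n) ℂ} {l : ℂ} {w : Fin n → ℂ}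
    (hw : w ≠ 0) (h : Matrix.vecMul w A = l • w) {b : Fin n → ℂ} (hc : Controllable A b) :
    w ⬝ᵥ b ≠ 0 := by
  intro h0
  apply hw
  have hle : Submodule.span ℂ (Set.range fun k : Fin n => (A ^ (k : ℕ)) *ᵥ b) ≤
      LinearMap.ker (dotProductBilin ℂ ℂ w) := by
    rw [Submodule.span_le]
    rintro _ ⟨k, rfl⟩
    simp [ctrl_dot_pow h, h0]
  rw [hc] at hle
  funext i
  have := hle (Submodule.mem_top (x := Pi.single i 1))
  simpa using this

theorem ctrl_of_ne {n : ℕ} {A : Matrix (Fin n) (Fin n) ℂ} {lam : Fin n → ℂ}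
    {w : Fin n → Fin n → ℂ} (hdist : ∀ j j' : Fin n, j ≠ j' → lam j ≠ lam j')
    (heig : ∀ j, Matrix.vecMul (w j) A = lam j • w j) {b : Fin n → ℂ}
    (hb : ∀ j, w j ⬝ᵥ b ≠ 0) : Controllable A b := by
  let K : Matrix (Fin n) (Fin n) ℂ := Matrix.of fun k => (A ^ (k : ℕ)) *ᵥ b
  have hK : Matrix.of w * Kᵀ = Matrix.diagonal (fun j => w j ⬝ᵥ b) * Matrix.vandermonde lam := by
    ext j k
    rw [Matrix.diagonal_mul, Matrix.vandermonde_apply, mul_comm, ← ctrl_dot_pow (heig j)]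
    rfl
  have hdet : (Matrix.of w * Kᵀ).det ≠ 0 := by
    rw [hK, Matrix.det_mul, Matrix.det_diagonal]
    refine mul_ne_zero (Finset.prod_ne_zero_iff.2 fun j _ => hb j) ?_
    rw [Matrix.det_vandermonde_ne_zero_iff]
    intro i j hij
    by_contra hne
    exact hdist i j hne hij
  rw [Matrix.det_mul, Matrix.det_transpose] at hdet
  have hu : IsUnit K := (Matrix.isUnit_iff_isUnit_det K).2 (right_ne_zero_of_mul hdet).isUnit
  have hli := Matrix.linearIndependent_rows_iff_isUnit.2 hu
  exact hli.span_eq_top_of_card_eq_finrank' (by simp)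

open Polynomial in
theorem ctrl_exists {n : ℕ} {w : Fin n → Fin n → ℂ} {S : Set (Fin n)}
    (hS : ∀ j : Fin n, ∃ k ∈ S, w j k ≠ 0) :
    ∃ b : Fin n → ℂ, {i | b i ≠ 0} ⊆ S ∧ ∀ j, w j ⬝ᵥ b ≠ 0 := by
  classical
  let p : Fin n → ℂ[X] := fun j => ∑ i, if i ∈ S then C (w j i) * X ^ (i : ℕ) else 0
  have hp : ∀ j, p j ≠ 0 := by
    intro j h0
    obtain ⟨k, hk, hne⟩ := hS j
    apply hne
    have h1 : (p j).coeff k = 0 := by rw [h0]; simp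
    simp only [p, finset_sum_coeff] at h1
    rw [Finset.sum_eq_single k] at h1
    · simpa [hk] using h1
    · intro i _ hi
      have : (k : ℕ) ≠ i := fun h => hi (Fin.ext h.symm)
      split_ifs <;> simp [coeff_X_pow, this]
    · simp
  have hprod : (∏ j, p j) ≠ 0 := Finset.prod_ne_zero_iff.2 fun j _ => hp j
  obtain ⟨t, ht⟩ : ∃ t, (∏ j, p j).eval t ≠ 0 := by
    by_contra! h
    exact hprod (Polynomial.funext (by simpa using h))
  rw [eval_prod, Finset.prod_ne_zero_iff] at ht
  refine ⟨fun i => if i ∈ S then t ^ (i : ℕ) else 0, ?_, ?_⟩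
  · intro i hi
    by_contra h
    simp [h] at hi
  · intro j
    convert ht j (Finset.mem_univ j) using 1
    simp only [p, eval_finset_sum, dotProduct]
    refine Finset.sum_congr rfl fun i _ => ?_
    split_ifs <;> simp

/-- for a matrix with `n` distinct eigenvalues and left
eigenvectors `w j`, the minimal number of nonzero entries of a `b` making
`(A, b)` controllable equals the minimal cardinality of a set cover of
`{1, …, n}` by the sets `S_i = {j : w j i ≠ 0}`; both minima are attained. -/
theorem stmt_6 {n : ℕ} (A : Matrix (Fin n) (Fin n) ℂ) (lam : Fin n → ℂ)
    (w : Fin n → Fin n → ℂ)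
    (hdist : ∀ j j' : Fin n, j ≠ j' → lam j ≠ lam j')
    (hw : ∀ j, w j ≠ 0)
    (heig : ∀ j, Matrix.vecMul (w j) A = lam j • w j) :
    sInf {m : ℕ | ∃ b : Fin n → ℂ, Controllable A b ∧ {i | b i ≠ 0}.ncard = m}
      = sInf {m : ℕ | ∃ S : Set (Fin n),
          (∀ j : Fin n, ∃ k ∈ S, w j k ≠ 0) ∧ S.ncard = m} ∧
    sInf {m : ℕ | ∃ b : Fin n → ℂ, Controllable A b ∧ {i | b i ≠ 0}.ncard = m}
      ∈ {m : ℕ | ∃ b : Fin n → ℂ, Controllable A b ∧ {i | b i ≠ 0}.ncard = m} ∧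
    sInf {m : ℕ | ∃ S : Set (Fin n),
          (∀ j : Fin n, ∃ k ∈ S, w j k ≠ 0) ∧ S.ncard = m}
      ∈ {m : ℕ | ∃ S : Set (Fin n),
          (∀ j : Fin n, ∃ k ∈ S, w j k ≠ 0) ∧ S.ncard = m} := by
  set B := {m : ℕ | ∃ b : Fin n → ℂ, Controllable A b ∧ {i | b i ≠ 0}.ncard = m} with hB
  set C := {m : ℕ | ∃ S : Set (Fin n), (∀ j : Fin n, ∃ k ∈ S, w j k ≠ 0) ∧ S.ncard = m} with hC
  have hBC : B ⊆ C := by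
    rintro m ⟨b, hb, rfl⟩
    refine ⟨_, fun j => ?_, rfl⟩
    obtain ⟨k, _, hk⟩ := Finset.exists_ne_zero_of_sum_ne_zero (ctrl_ne (hw j) (heig j) hb)
    exact ⟨k, right_ne_zero_of_mul hk, left_ne_zero_of_mul hk⟩
  have hCB : ∀ m ∈ C, ∃ m' ∈ B, m' ≤ m := by
    rintro m ⟨S, hS, rfl⟩
    obtain ⟨b, hbS, hb⟩ := ctrl_exists hS
    exact ⟨_, ⟨b, ctrl_of_ne hdist heig hb, rfl⟩, Set.ncard_le_ncard hbS (Set.toFinite S)⟩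
  have hCne : C.Nonempty :=
    ⟨_, Set.univ, fun j => by simpa using Function.ne_iff.1 (hw j), rfl⟩
  have hCmem := Nat.sInf_mem hCne
  obtain ⟨m', hm', hle⟩ := hCB _ hCmem
  have hBmem := Nat.sInf_mem (⟨m', hm'⟩ : B.Nonempty)
  exact ⟨le_antisymm ((Nat.sInf_le hm').trans hle) (Nat.sInf_le (hBC hBmem)), hBmem, hCmem⟩
end

section
/- Let A : Matrix (Fin n) (Fin n) ℂ have pairwise distinct eigenvalues λ : Fin n → ℂ with corresponding left eigenvectors w : Fin n → (Fin n → ℂ) (w j ≠ 0 and Matrix.vecMul (w j) A = λ j • w j for every j), and let S ⊆ Fin n be a set such that for every j : Fin n there exists k ∈ S with w j k ≠ 0. For c : S → ℂ, let b_c : Fin n → ℂ be the extension of c by zero outside S. Then for almost every c : S → ℂ (with respect to Lebesgue measure on S → ℂ), the pair (A, b_c) is controllable. -/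
open Matrix MeasureTheory

theorem controllable_of_dot_ne_zero {n : ℕ} (A : Matrix (Fin n) (Fin n) ℂ) (lam : Fin n → ℂ)
    (w : Fin n → Fin n → ℂ)
    (hdist : ∀ j j' : Fin n, j ≠ j' → lam j ≠ lam j')
    (heig : ∀ j, Matrix.vecMul (w j) A = lam j • w j)
    (b : Fin n → ℂ) (hb : ∀ j, w j ⬝ᵥ b ≠ 0) : Controllable A b := by
  have hpow : ∀ (k : ℕ) (j : Fin n), w j ᵥ* (A ^ k) = lam j ^ k • w j := by
    intro k j
    induction k with
    | zero => simp
    | succ k ih =>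
      rw [pow_succ, ← Matrix.vecMul_vecMul, ih, Matrix.smul_vecMul, heig, smul_smul, pow_succ]
  let K : Matrix (Fin n) (Fin n) ℂ := Matrix.of fun k => (A ^ (k : ℕ)) *ᵥ b
  have hprod : Matrix.of w * Kᵀ
      = Matrix.diagonal (fun j => w j ⬝ᵥ b) * Matrix.vandermonde lam := by
    ext j k
    rw [Matrix.diagonal_mul, Matrix.vandermonde_apply]
    have h1 : (Matrix.of w * Kᵀ) j k = w j ⬝ᵥ ((A ^ (k : ℕ)) *ᵥ b) := rfl
    rw [h1, Matrix.dotProduct_mulVec, hpow, smul_dotProduct, smul_eq_mul, mul_comm]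
  have hdet : (Matrix.of w * Kᵀ).det ≠ 0 := by
    rw [hprod, Matrix.det_mul, Matrix.det_diagonal]
    refine mul_ne_zero (Finset.prod_ne_zero_iff.mpr fun j _ => hb j) ?_
    rw [Matrix.det_vandermonde_ne_zero_iff]
    intro i j hij
    by_contra h
    exact hdist i j h hij
  have hK : K.det ≠ 0 := by
    intro h
    apply hdet
    rw [Matrix.det_mul, Matrix.det_transpose, h, mul_zero]
  have hli : LinearIndependent ℂ K.row :=
    Matrix.linearIndependent_rows_of_det_ne_zero hK
  exact hli.span_eq_top_of_card_eq_finrank' (by simp)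

/-- for a matrix with distinct eigenvalues and left eigenvectors
`w j`, if `S` hits the support of every `w j`, then for almost every `c : S → ℂ`
the extension of `c` by zero gives a controllable pair `(A, b_c)`. -/
theorem stmt_9 {n : ℕ} (A : Matrix (Fin n) (Fin n) ℂ) (lam : Fin n → ℂ)
    (w : Fin n → Fin n → ℂ)
    (hdist : ∀ j j' : Fin n, j ≠ j' → lam j ≠ lam j')
    (hw : ∀ j, w j ≠ 0)
    (heig : ∀ j, Matrix.vecMul (w j) A = lam j • w j)
    (S : Finset (Fin n))
    (hS : ∀ j : Fin n, ∃ k ∈ S, w j k ≠ 0) :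
    ∀ᵐ c : ↥S → ℂ,
      Controllable A (fun i => if h : i ∈ S then c ⟨i, h⟩ else 0) := by
  have key : ∀ j : Fin n, ∀ᵐ c : ↥S → ℂ,
      w j ⬝ᵥ (fun i => if h : i ∈ S then c ⟨i, h⟩ else 0) ≠ 0 := by
    intro j
    let L : (↥S → ℂ) →ₗ[ℝ] ℂ :=
      { toFun := fun c => w j ⬝ᵥ (fun i => if h : i ∈ S then c ⟨i, h⟩ else 0)
        map_add' := by
          intro x y
          rw [← dotProduct_add]
          congr 1
          ext i
          by_cases h : i ∈ S <;> simp [h]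
        map_smul' := by
          intro r x
          rw [RingHom.id_apply, ← dotProduct_smul]
          congr 1
          ext i
          by_cases h : i ∈ S <;> simp [h] }
    have hne : LinearMap.ker L ≠ ⊤ := by
      intro htop
      obtain ⟨k, hk, hwk⟩ := hS j
      have hmem : (Pi.single ⟨k, hk⟩ 1 : ↥S → ℂ) ∈ LinearMap.ker L := htop ▸ Submodule.mem_top
      have h0 : w j ⬝ᵥ (fun i => if h : i ∈ S then
          (Pi.single ⟨k, hk⟩ 1 : ↥S → ℂ) ⟨i, h⟩ else 0) = 0 := hmem
      have h1 : (fun i => if h : i ∈ S then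
          (Pi.single ⟨k, hk⟩ 1 : ↥S → ℂ) ⟨i, h⟩ else 0) = Pi.single k 1 := by
        ext i
        by_cases hik : i = k
        · subst hik
          simp [hk]
        · by_cases h : i ∈ S <;> simp [h, hik, Pi.single_apply]
      rw [h1, dotProduct_single, mul_one] at h0
      exact hwk h0
    have h := Measure.addHaar_submodule (volume : Measure (↥S → ℂ)) (LinearMap.ker L) hne
    rw [ae_iff]
    refine measure_mono_null ?_ h
    intro c hc
    exact not_not.mp hc
  filter_upwards [ae_all_iff.mpr key] with c hc
  exact controllable_of_dot_ne_zero A lam w hdist heig _ hc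
end

section
/- Let A : Matrix (Fin n) (Fin n) ℂ have pairwise distinct eigenvalues λ : Fin n → ℂ with corresponding left eigenvectors w : Fin n → (Fin n → ℂ) (w j ≠ 0 and Matrix.vecMul (w j) A = λ j • w j for every j), and let S ⊆ Fin n be any set such that for every j : Fin n there exists k ∈ S with w j k ≠ 0 (i.e., S corresponds to a, possibly non-minimal, set cover of the sets S_i = {j : w j i ≠ 0}). Then there exists b : Fin n → ℂ with support contained in S such that the pair (A, b) is controllable. -/
open Matrix

/-- any (possibly non-minimal) set cover `S` of the supports of
the left eigenvectors of a matrix with distinct eigenvalues yields a vector `b`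
supported in `S` such that `(A, b)` is controllable. -/
theorem stmt_10 {n : ℕ} (A : Matrix (Fin n) (Fin n) ℂ) (lam : Fin n → ℂ)
    (w : Fin n → Fin n → ℂ)
    (hdist : ∀ j j' : Fin n, j ≠ j' → lam j ≠ lam j')
    (hw : ∀ j, w j ≠ 0)
    (heig : ∀ j, Matrix.vecMul (w j) A = lam j • w j)
    (S : Set (Fin n))
    (hS : ∀ j : Fin n, ∃ k ∈ S, w j k ≠ 0) :
    ∃ b : Fin n → ℂ, {i | b i ≠ 0} ⊆ S ∧ Controllable A b := by
  let p : Submodule ℂ (Fin n → ℂ) :=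
    { carrier := {b | ∀ i, i ∉ S → b i = 0}
      add_mem' := by
        intro a b ha hb i hi
        simp [ha i hi, hb i hi]
      zero_mem' := by
        intro i _
        rfl
      smul_mem' := by
        intro c b hb i hi
        simp [hb i hi] }
  obtain ⟨b, hbp, hb⟩ := Module.Dual.exists_forall_mem_ne_zero_of_forall_exists p
    (fun j => (dotProductBilin ℂ ℂ (w j) : Module.Dual ℂ (Fin n → ℂ))) (by
      intro j
      obtain ⟨k, hk, hne⟩ := hS j
      refine ⟨Pi.single k 1, ?_, ?_⟩
      · intro i hi
        have : i ≠ k := fun h => hi (h ▸ hk)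
        simp [this]
      · simpa using hne)
  have hb' : ∀ j, w j ⬝ᵥ b ≠ 0 := fun j => by simpa using hb j
  refine ⟨b, ?_, ?_⟩
  · intro i hi
    by_contra h
    exact hi (hbp i h)
  have hpow : ∀ j (k : ℕ), w j ᵥ* (A ^ k) = lam j ^ k • w j := by
    intro j k
    induction k with
    | zero => simp
    | succ k ih =>
      rw [pow_succ, ← Matrix.vecMul_vecMul, ih, Matrix.smul_vecMul, heig, smul_smul, pow_succ]
  have hinj : Function.Injective lam := by
    intro a c h
    by_contra hne
    exact hdist a c hne h
  unfold Controllable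
  apply LinearIndependent.span_eq_top_of_card_eq_finrank'
  · rw [Fintype.linearIndependent_iff]
    intro g hg
    have hg0 : g = 0 := by
      apply Matrix.eq_zero_of_forall_index_sum_pow_mul_eq_zero hinj
      intro j
      have h := congrArg (fun v => w j ⬝ᵥ v) hg
      simp only [dotProduct_sum, dotProduct_smul, dotProduct_mulVec, hpow, smul_dotProduct,
        dotProduct_zero, smul_eq_mul] at h
      have h2 : (∑ k : Fin n, lam j ^ (k : ℕ) * g k) * (w j ⬝ᵥ b) = 0 := by
        rw [← h, Finset.sum_mul]
        exact Finset.sum_congr rfl fun k _ => by ring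
      exact (mul_eq_zero.mp h2).resolve_right (hb' j)
    intro i
    simp [hg0]
  · simp
end

section
/- Let A : Matrix (Fin n) (Fin n) ℂ and b : Fin n → ℂ. If the pair (A, b) is controllable, then every eigenvalue of A has geometric multiplicity one; that is, for every λ ∈ ℂ, the dimension over ℂ of the eigenspace {x : Fin n → ℂ | A *ᵥ x = λ • x} is at most 1. -/
open Matrix

/-- The eigenspace `{x | A *ᵥ x = μ • x}` of a matrix, as a submodule. -/
noncomputable def matrixEigenspace {n : ℕ} (A : Matrix (Fin n) (Fin n) ℂ) (μ : ℂ) :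
    Submodule ℂ (Fin n → ℂ) where
  carrier := {x : Fin n → ℂ | A *ᵥ x = μ • x}
  add_mem' := by
    intro x y hx hy
    simp only [Set.mem_setOf_eq] at *
    rw [Matrix.mulVec_add, hx, hy, smul_add]
  zero_mem' := by simp
  smul_mem' := by
    intro c x hx
    simp only [Set.mem_setOf_eq] at *
    rw [Matrix.mulVec_smul, hx, smul_comm]

/-- if `(A, b)` is controllable (single input), every eigenvalue
of `A` has geometric multiplicity at most one. -/
theorem stmt_11 {n : ℕ} (A : Matrix (Fin n) (Fin n) ℂ) (b : Fin n → ℂ)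
    (h : Controllable A b) (μ : ℂ) :
    Module.finrank ℂ (matrixEigenspace A μ) ≤ 1 := by
  set f : (Fin n → ℂ) →ₗ[ℂ] (Fin n → ℂ) := A.mulVecLin - μ • LinearMap.id with hf
  have hfx : ∀ x, f x = A *ᵥ x - μ • x := fun x => by simp [hf]
  have hker : matrixEigenspace A μ = LinearMap.ker f := by
    ext x
    rw [LinearMap.mem_ker, hfx, sub_eq_zero]
    rfl
  -- every `A ^ k *ᵥ b` is congruent to a multiple of `b` modulo the range of `f`
  have hmem : ∀ k : ℕ, (A ^ k) *ᵥ b ∈ LinearMap.range f ⊔ Submodule.span ℂ {b} := by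
    intro k
    induction k with
    | zero =>
      rw [pow_zero, Matrix.one_mulVec]
      exact Submodule.mem_sup_right (Submodule.mem_span_singleton_self b)
    | succ k ih =>
      have e : (A ^ (k + 1)) *ᵥ b = f ((A ^ k) *ᵥ b) + μ • ((A ^ k) *ᵥ b) := by
        rw [hfx, sub_add_cancel, Matrix.mulVec_mulVec, pow_succ']
      rw [e]
      exact add_mem (Submodule.mem_sup_left ⟨_, rfl⟩) (Submodule.smul_mem _ _ ih)
  have htop : LinearMap.range f ⊔ Submodule.span ℂ {b} = ⊤ := by
    rw [eq_top_iff, ← (show _ = ⊤ from h), Submodule.span_le]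
    rintro _ ⟨k, rfl⟩
    exact hmem k
  have h1 := Submodule.finrank_add_le_finrank_add_finrank (LinearMap.range f)
    (Submodule.span ℂ {b})
  rw [htop, finrank_top] at h1
  have h2 := LinearMap.finrank_range_add_finrank_ker f
  have h3 : Module.finrank ℂ (Submodule.span ℂ {b}) ≤ 1 := by
    simpa using finrank_span_le_card (R := ℂ) ({b} : Set (Fin n → ℂ))
  rw [hker]
  omega
end

section
/- Let (P_A, P_b) with P_A ⊆ Fin n × Fin n and P_b ⊆ Fin n be a structurally controllable sparsity pattern. For a : P_A → ℂ and c : P_b → ℂ, let A_a : Matrix (Fin n) (Fin n) ℂ be the matrix with (A_a) i j = a (i, j) for (i, j) ∈ P_A and (A_a) i j = 0 otherwise, and let b_c : Fin n → ℂ be c on P_b and 0 outside P_b. Then the set of pairs (a, c) ∈ (P_A → ℂ) × (P_b → ℂ) for which the pair (A_a, b_c) is NOT controllable has Lebesgue measure zero with respect to the product measure; i.e., almost all realizations respecting a structurally controllable pattern are controllable. -/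
open Matrix MeasureTheory

/-- `(A, b)` realizes the sparsity pattern `(PA, Pb)`. -/
def Realizes {n : ℕ} (PA : Set (Fin n × Fin n)) (Pb : Set (Fin n))
    (A : Matrix (Fin n) (Fin n) ℂ) (b : Fin n → ℂ) : Prop :=
  (∀ i j, A i j ≠ 0 ↔ (i, j) ∈ PA) ∧ (∀ i, b i ≠ 0 ↔ i ∈ Pb)

/-- A sparsity pattern is structurally controllable if some realization of it
is controllable. -/
def StructurallyControllable {n : ℕ} (PA : Set (Fin n × Fin n))
    (Pb : Set (Fin n)) : Prop :=
  ∃ A b, Realizes PA Pb A b ∧ Controllable A b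

/-- The (transposed) Kalman matrix. -/
def kal {R : Type*} [CommRing R] {n : ℕ} (A : Matrix (Fin n) (Fin n) R) (b : Fin n → R) :
    Matrix (Fin n) (Fin n) R :=
  Matrix.of fun k i => ((A ^ (k : ℕ)) *ᵥ b) i

theorem controllable_iff {n : ℕ} (A : Matrix (Fin n) (Fin n) ℂ) (b : Fin n → ℂ) :
    Controllable A b ↔ (kal A b).det ≠ 0 := by
  rw [← isUnit_iff_ne_zero, ← Matrix.isUnit_iff_isUnit_det,
    ← Matrix.linearIndependent_rows_iff_isUnit]
  constructor
  · intro h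
    exact linearIndependent_of_top_le_span_of_card_eq_finrank (le_of_eq h.symm) (by simp)
  · intro h
    exact LinearIndependent.span_eq_top_of_card_eq_finrank' h (by simp)

theorem kal_map {R S : Type*} [CommRing R] [CommRing S] (f : R →+* S) {n : ℕ}
    (A : Matrix (Fin n) (Fin n) R) (b : Fin n → R) :
    f (kal A b).det = (kal (f.mapMatrix A) (f ∘ b)).det := by
  rw [RingHom.map_det]
  congr 1
  ext k i
  simp only [kal, RingHom.mapMatrix_apply, Matrix.map_apply, Matrix.of_apply, RingHom.map_mulVec]
  rw [← RingHom.mapMatrix_apply, map_pow, RingHom.mapMatrix_apply]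

theorem kal_smul {n : ℕ} (c : ℂ) (A : Matrix (Fin n) (Fin n) ℂ) (b : Fin n → ℂ) :
    (kal (c • A) (c • b)).det = (∏ k : Fin n, c ^ ((k : ℕ) + 1)) * (kal A b).det := by
  rw [← Matrix.det_mul_column]
  congr 1
  ext k i
  simp only [kal, Matrix.of_apply, smul_pow, Matrix.smul_mulVec, Matrix.mulVec_smul,
    Pi.smul_apply, smul_eq_mul]
  ring

/-- Along any line in the direction of a controllable pair, only finitely many pairs fail. -/
theorem finite_bad {n : ℕ} (A A0 : Matrix (Fin n) (Fin n) ℂ) (b b0 : Fin n → ℂ)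
    (h0 : (kal A0 b0).det ≠ 0) :
    {t : ℂ | (kal (A + t • A0) (b + t • b0)).det = 0}.Finite := by
  classical
  let P : Polynomial ℂ := (kal (Matrix.of fun i j => Polynomial.C (A i j) * Polynomial.X +
    Polynomial.C (A0 i j)) (fun i => Polynomial.C (b i) * Polynomial.X + Polynomial.C (b0 i))).det
  have hP : ∀ s : ℂ, P.eval s = (kal (s • A + A0) (s • b + b0)).det := by
    intro s
    have := kal_map (Polynomial.evalRingHom s) (Matrix.of fun i j => Polynomial.C (A i j) *
      Polynomial.X + Polynomial.C (A0 i j))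
      (fun i => Polynomial.C (b i) * Polynomial.X + Polynomial.C (b0 i))
    rw [Polynomial.coe_evalRingHom] at this
    refine this.trans ?_
    congr 2
    · ext i j
      simp [mul_comm s]
    · ext i
      simp [mul_comm s]
  have hP0 : P ≠ 0 := by
    intro h
    apply h0
    have := hP 0
    simpa [h] using this.symm
  have hfin : ({0} ∪ Set.image (fun s : ℂ => s⁻¹) {s | P.IsRoot s}).Finite :=
    (Set.finite_singleton _).union ((Polynomial.finite_setOfPred_isRoot hP0).image _)
  refine hfin.subset ?_
  intro t ht
  by_cases h : t = 0
  · left; exact h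
  · right
    refine ⟨t⁻¹, ?_, inv_inv t⟩
    have e1 : A + t • A0 = t • (t⁻¹ • A + A0) := by
      rw [smul_add, smul_smul, mul_inv_cancel₀ h, one_smul]
    have e2 : b + t • b0 = t • (t⁻¹ • b + b0) := by
      rw [smul_add, smul_smul, mul_inv_cancel₀ h, one_smul]
    rw [Set.mem_ofPred_eq, e1, e2, kal_smul, mul_eq_zero] at ht
    rcases ht with ht | ht
    · exact absurd ht (Finset.prod_ne_zero_iff.2 fun k _ => pow_ne_zero _ h)
    · show P.eval _ = 0
      rw [hP, ht]

/-- for a structurally controllable sparsity pattern, the set of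
numerical realizations (parametrized by their values on the pattern) that are
not controllable has Lebesgue measure zero. -/
theorem stmt_12 {n : ℕ} (PA : Finset (Fin n × Fin n)) (Pb : Finset (Fin n))
    (hsc : StructurallyControllable (PA : Set (Fin n × Fin n))
      (Pb : Set (Fin n))) :
    volume {p : (↥PA → ℂ) × (↥Pb → ℂ) |
      ¬ Controllable
          (Matrix.of fun i j : Fin n =>
            if h : (i, j) ∈ PA then p.1 ⟨(i, j), h⟩ else 0)
          (fun i : Fin n => if h : i ∈ Pb then p.2 ⟨i, h⟩ else 0)} = 0 := by
  classical
  obtain ⟨A0, b0, ⟨hA, hb⟩, hc⟩ := hsc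
  rw [controllable_iff] at hc
  let MA : ((↥PA → ℂ) × (↥Pb → ℂ)) → Matrix (Fin n) (Fin n) ℂ := fun p =>
    Matrix.of fun i j : Fin n => if h : (i, j) ∈ PA then p.1 ⟨(i, j), h⟩ else 0
  let mb : ((↥PA → ℂ) × (↥Pb → ℂ)) → Fin n → ℂ := fun p i =>
    if h : i ∈ Pb then p.2 ⟨i, h⟩ else 0
  let p0 : (↥PA → ℂ) × (↥Pb → ℂ) := (fun x => A0 x.1.1 x.1.2, fun x => b0 x.1)
  have hMA0 : MA p0 = A0 := by
    ext i j
    by_cases h : (i, j) ∈ PA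
    · simp [MA, p0, h]
    · have := mt (hA i j).1 (by simpa using h)
      simp only [not_not] at this
      simp [MA, h, this]
  have hmb0 : mb p0 = b0 := by
    ext i
    by_cases h : i ∈ Pb
    · simp [mb, p0, h]
    · have := mt (hb i).1 (by simpa using h)
      simp only [not_not] at this
      simp [mb, h, this]
  have hMA : ∀ y (t : ℂ), MA (y + t • p0) = MA y + t • A0 := by
    intro y t
    rw [← hMA0]
    ext i j
    by_cases h : (i, j) ∈ PA <;> simp [MA, h]
  have hmb : ∀ y (t : ℂ), mb (y + t • p0) = mb y + t • b0 := by
    intro y t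
    rw [← hmb0]
    ext i
    by_cases h : i ∈ Pb <;> simp [mb, h]
  have cMA : Continuous MA := by
    refine continuous_matrix fun i j => ?_
    by_cases h : (i, j) ∈ PA
    · simp only [MA, Matrix.of_apply, h, dite_true]
      fun_prop
    · simp only [MA, Matrix.of_apply, h, dite_false]
      fun_prop
  have cmb : Continuous mb := by
    refine continuous_pi fun i => ?_
    by_cases h : i ∈ Pb
    · simp only [mb, h, dite_true]
      fun_prop
    · simp only [mb, h, dite_false]
      fun_prop
  have cdet : Continuous fun p => (kal (MA p) (mb p)).det := by
    refine Continuous.matrix_det (continuous_matrix fun k i => ?_)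
    exact (continuous_apply i).comp ((cMA.pow _).matrix_mulVec cmb)
  have hmeas : MeasurableSet {p | (kal (MA p) (mb p)).det ≠ 0} :=
    (isOpen_ne_fun cdet continuous_const).measurableSet
  have i1 : (volume : Measure (↥PA → ℂ)).IsAddHaarMeasure := inferInstance
  have i2 : (volume : Measure (↥Pb → ℂ)).IsAddHaarMeasure := inferInstance
  have i3 : ((volume : Measure (↥PA → ℂ)).prod (volume : Measure (↥Pb → ℂ))).IsAddHaarMeasure :=
    inferInstance
  have key := ae_mem_of_ae_add_linearMap_mem
    (LinearMap.toSpanSingleton ℂ ((↥PA → ℂ) × (↥Pb → ℂ)) p0) (volume : Measure ℂ)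
    ((volume : Measure (↥PA → ℂ)).prod (volume : Measure (↥Pb → ℂ))) hmeas (by
      intro y
      rw [ae_iff]
      refine Set.Finite.measure_zero ?_ _
      refine (finite_bad (MA y) A0 (mb y) b0 hc).subset ?_
      intro t ht
      simpa [hMA, hmb] using ht)
  rw [ae_iff] at key
  rw [Measure.volume_eq_prod]
  refine (congrArg _ ?_).trans key
  ext p
  exact not_congr (controllable_iff (MA p) (mb p))
end

section
/- Let A : Matrix (Fin 5) (Fin 5) ℂ be the matrix with rows (3, 3/2, −3/2, −1, 1/2), (0, 2, 0, 0, 0), (−2, −3/2, 5/2, −1, −1/2), (0, 0, 0, 3, 0), (2, 3/2, 3/2, 1, 9/2). Then: (i) there exists b : Fin 5 → ℂ with exactly 3 nonzero entries (for instance b = (0, 1, 1, 1, 0)) such that the pair (A, b) is controllable; and (ii) for every b : Fin 5 → ℂ such that (A, b) is controllable, b has at least 3 nonzero entries. Hence the minimum of ‖b‖₀ over b making (A, b) controllable equals 3. -/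
open Matrix

/-- The illustrative example matrix from the paper. -/
noncomputable def Aex : Matrix (Fin 5) (Fin 5) ℂ :=
  !![3, 3/2, -3/2, -1, 1/2;
     0, 2, 0, 0, 0;
     -2, -3/2, 5/2, -1, -1/2;
     0, 0, 0, 3, 0;
     2, 3/2, 3/2, 1, 9/2]

theorem aux_pow (k : ℕ) (b v w : Fin 5 → ℂ) (h : (Aex ^ k) *ᵥ b = v) (h' : Aex *ᵥ v = w) :
    (Aex ^ (k + 1)) *ᵥ b = w := by
  rw [pow_succ', ← Matrix.mulVec_mulVec, h, h']

theorem aux_ctrl : Controllable Aex ![0, 1, 1, 1, 0] := by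
  have h0 : (Aex ^ 0) *ᵥ ![0, 1, 1, 1, 0] = ![0, 1, 1, 1, 0] := by simp
  have h1 : (Aex ^ 1) *ᵥ ![0, 1, 1, 1, 0] = ![-1, 2, 0, 3, 4] := by
    refine aux_pow 0 _ _ _ h0 ?_
    ext i
    fin_cases i <;> simp [Aex, Matrix.mulVec, dotProduct, Fin.sum_univ_five] <;> norm_num
  have h2 : (Aex ^ 2) *ᵥ ![0, 1, 1, 1, 0] = ![-1, 4, -6, 9, 22] := by
    refine aux_pow 1 _ _ _ h1 ?_
    ext i
    fin_cases i <;> simp [Aex, Matrix.mulVec, dotProduct, Fin.sum_univ_five] <;> norm_num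
  have h3 : (Aex ^ 3) *ᵥ ![0, 1, 1, 1, 0] = ![14, 8, -39, 27, 103] := by
    refine aux_pow 2 _ _ _ h2 ?_
    ext i
    fin_cases i <;> simp [Aex, Matrix.mulVec, dotProduct, Fin.sum_univ_five] <;> norm_num
  have h4 : (Aex ^ 4) *ᵥ ![0, 1, 1, 1, 0] = ![137, 16, -216, 81, 472] := by
    refine aux_pow 3 _ _ _ h3 ?_
    ext i
    fin_cases i <;> simp [Aex, Matrix.mulVec, dotProduct, Fin.sum_univ_five] <;> norm_num
  unfold Controllable
  rw [Submodule.eq_top_iff']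
  intro x
  rw [Submodule.mem_span_range_iff_exists_fun]
  refine ⟨![(7/2) * x 0 + (-9) * x 1 + (-5/2) * x 2 + (25/2) * x 3 + (-4) * x 4,
      (-127/24) * x 0 + (63/4) * x 1 + (167/24) * x 2 + (-545/24) * x 3 + (97/12) * x 4,
      (47/16) * x 0 + (-67/8) * x 1 + (-257/48) * x 2 + (659/48) * x 3 + (-43/8) * x 4,
      (-17/24) * x 0 + (7/4) * x 1 + (37/24) * x 2 + (-79/24) * x 3 + (17/12) * x 4,
      (1/16) * x 0 + (-1/8) * x 1 + (-7/48) * x 2 + (13/48) * x 3 + (-1/8) * x 4], ?_⟩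
  have e0 : ((0 : Fin 5) : ℕ) = 0 := rfl
  have e1 : ((1 : Fin 5) : ℕ) = 1 := rfl
  have e2 : ((2 : Fin 5) : ℕ) = 2 := rfl
  have e3 : ((3 : Fin 5) : ℕ) = 3 := rfl
  have e4 : ((4 : Fin 5) : ℕ) = 4 := rfl
  rw [Fin.sum_univ_five, e0, e1, e2, e3, e4, h0, h1, h2, h3, h4]
  ext i
  fin_cases i <;> simp <;> ring

theorem aux_not (v b : Fin 5 → ℂ) (c : ℂ) (hv : v ≠ 0) (hA : v ᵥ* Aex = c • v)
    (h : Controllable Aex b) : v ⬝ᵥ b ≠ 0 := by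
  intro hb
  have hk : ∀ k : ℕ, v ⬝ᵥ ((Aex ^ k) *ᵥ b) = 0 := by
    intro k
    induction k with
    | zero => simpa using hb
    | succ k ih =>
      rw [pow_succ', ← Matrix.mulVec_mulVec, Matrix.dotProduct_mulVec, hA, smul_dotProduct, ih,
        smul_zero]
  have hall : ∀ x : Fin 5 → ℂ, v ⬝ᵥ x = 0 := by
    intro x
    have hx : x ∈ Submodule.span ℂ (Set.range fun k : Fin 5 => (Aex ^ (k : ℕ)) *ᵥ b) := by
      rw [h]; trivial
    induction hx using Submodule.span_induction with
    | mem x hx => obtain ⟨k, rfl⟩ := hx; exact hk k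
    | zero => simp
    | add x y _ _ hx hy => rw [dotProduct_add, hx, hy, add_zero]
    | smul a x _ hx => rw [dotProduct_smul, hx, smul_zero]
  apply hv
  ext i
  simpa using hall (Pi.single i 1)

theorem aux_lower (b : Fin 5 → ℂ) (h : Controllable Aex b) :
    3 ≤ {i : Fin 5 | b i ≠ 0}.ncard := by
  have h1 : b 1 ≠ 0 := by
    have := aux_not ![0, 1, 0, 0, 0] b 2 (fun h => by simpa using congrFun h 1)
      (by ext i; fin_cases i <;> simp [Aex, Matrix.vecMul, dotProduct, Fin.sum_univ_five]) h
    simpa [dotProduct, Fin.sum_univ_five] using this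
  have h3 : b 3 ≠ 0 := by
    have := aux_not ![0, 0, 0, 1, 0] b 3 (fun h => by simpa using congrFun h 3)
      (by ext i; fin_cases i <;> simp [Aex, Matrix.vecMul, dotProduct, Fin.sum_univ_five]) h
    simpa [dotProduct, Fin.sum_univ_five] using this
  have h24 : b 2 + b 4 ≠ 0 := by
    have := aux_not ![0, 0, 1, 0, 1] b 4 (fun h => by simpa using congrFun h 2)
      (by
        ext i
        fin_cases i <;> simp [Aex, Matrix.vecMul, dotProduct, Fin.sum_univ_five] <;> norm_num) h
    simpa [dotProduct, Fin.sum_univ_five] using this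
  have key : ∀ j : Fin 5, j ≠ 1 → j ≠ 3 → b j ≠ 0 → 3 ≤ {i : Fin 5 | b i ≠ 0}.ncard := by
    intro j hj1 hj3 hj
    have hc : ({j, 1, 3} : Set (Fin 5)).ncard = 3 :=
      Set.ncard_eq_three.2 ⟨j, 1, 3, hj1, hj3, by decide, rfl⟩
    rw [← hc]
    apply Set.ncard_le_ncard _ (Set.toFinite _)
    rintro i (rfl | rfl | rfl)
    exacts [hj, h1, h3]
  by_cases h2 : b 2 = 0
  · exact key 4 (by decide) (by decide) (by simpa [h2] using h24)
  · exact key 2 (by decide) (by decide) h2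

theorem aux_card : {i : Fin 5 | (![0, 1, 1, 1, 0] : Fin 5 → ℂ) i ≠ 0}.ncard = 3 := by
  refine Set.ncard_eq_three.2 ⟨1, 2, 3, by decide, by decide, by decide, ?_⟩
  ext i
  fin_cases i <;> simp

/-- the input vector `b = (0,1,1,1,0)` with exactly `3` nonzero
entries makes `(A, b)` controllable, no `b` with fewer than `3` nonzero entries
does, and hence the minimum of `‖b‖₀` over controllable pairs equals `3`. -/
theorem stmt_14 :
    (Controllable Aex ![0, 1, 1, 1, 0] ∧
      {i : Fin 5 | (![0, 1, 1, 1, 0] : Fin 5 → ℂ) i ≠ 0}.ncard = 3) ∧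
    (∃ b : Fin 5 → ℂ, {i : Fin 5 | b i ≠ 0}.ncard = 3 ∧ Controllable Aex b) ∧
    (∀ b : Fin 5 → ℂ, Controllable Aex b → 3 ≤ {i : Fin 5 | b i ≠ 0}.ncard) ∧
    sInf {m : ℕ | ∃ b : Fin 5 → ℂ,
        Controllable Aex b ∧ {i : Fin 5 | b i ≠ 0}.ncard = m} = 3 := by
  refine ⟨⟨aux_ctrl, aux_card⟩, ⟨_, aux_card, aux_ctrl⟩, aux_lower, ?_⟩
  apply le_antisymm
  · exact Nat.sInf_le ⟨_, aux_ctrl, aux_card⟩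
  · refine le_csInf ⟨3, _, aux_ctrl, aux_card⟩ ?_
    rintro m ⟨b, hb, rfl⟩
    exact aux_lower b hb
end
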